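/- Let N ≥ 1, let α ∈ Pair_N and let j ∈ {1,…,2N−1} with {j,j+1} ∉ α. Then the function F = Z_{α/⨿_j} of the variables (x_1,…,x_{j−1},ξ,x_{j+2},…,x_{2N}) satisfies, at every point of the chamber x_1<⋯<x_{j−1}<ξ<x_{j+2}<⋯<x_{2N}, the third-order PDE (κ=4): ∂³F/∂ξ³ − 4 Σ_{i∉{j,j+1}} ( (1/4)·(∂F/∂ξ)/(x_i−ξ)² − (∂²F/∂x_i∂ξ)/(x_i−ξ) ) + 2 Σ_{i∉{j,j+1}} ( (1/2)·F/(x_i−ξ)³ − (∂F/∂x_i)/(x_i−ξ)² ) = 0. -/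

import Mathlib

/-!
Every fused conformal block solves the equation by itself, so the coefficients `M⁻¹` play no
role: the operator is linear and `Zfuse` is a linear combination of blocks.

Put `ρ_k = σ_k σ_j`, `u_k = 1 / (x_k - ξ)`, `A_m = ∑ ρ_k u_k ^ m` and
`P = ∏_{a<b} (x_b - x_a) ^ (ρ_a ρ_b / 2)`, over the unfused points only. A block fused at a slope
is `P ∏ |x_k - ξ| ^ ρ_k`, and one fused at a local minimum is `P A_1`. Since `∂_ξ u_k = u_k ^ 2`,
all derivatives in the equation are polynomials in `A_m`, `u_i` and `B_i = ∂_i log P`, times the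
block itself at a slope and times `P` at a local minimum. The identity `(u_b - u_a) / (x_b - x_a) = - u_a u_b` together with
`ρ_k ^ 2 = 1` gives
`4 ∑ u_i B_i = ∑ u_i ^ 2 - A_1 ^ 2` and `2 ∑ u_i ^ 2 B_i = ∑ u_i ^ 3 - A_1 A_2`
(`sum_recip_mul_dLogOuter`, `sum_recip_sq_mul_dLogOuter`), after which the equation is a
polynomial identity (`isSol_slope`, `isSol_min`). Both functions are handled as exponentials of
sums of logarithms, with which they agree on the open fused chamber.
-/

open Filter Finset
open scoped BigOperators Classical Topology

noncomputable section

/-- The open chamber `x 0 < x 1 < ⋯ < x (n-1)`. -/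
def chamber (n : ℕ) : Set (Fin n → ℝ) := {x | ∀ i j : Fin n, i < j → x i < x j}

/-- Planar pair partitions of `{0, …, 2N-1}` (i.e. of `{1,…,2N}` in 1-based labelling),
encoded as noncrossing fixed-point-free involutions: the links are the pairs `{i, f i}`. -/
def PlanarPair (N : ℕ) : Type :=
  {f : Fin (2 * N) → Fin (2 * N) //
    (∀ i, f (f i) = i) ∧ (∀ i, f i ≠ i) ∧
      ∀ i j, i < j → j < f i → i < f j ∧ f j < f i}

instance (N : ℕ) : Fintype (PlanarPair N) := by
  unfold PlanarPair; infer_instance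

/-- The Dyck step sequence of a planar pair partition: `+1` at openers, `-1` at closers. -/
def pairSign {N : ℕ} (α : PlanarPair N) (i : Fin (2 * N)) : ℝ :=
  if i < α.val i then 1 else -1

/-- The conformal block of a sign sequence: `∏_{i<j} (x_j - x_i)^{σ_i σ_j / 2}`. -/
def cblock {n : ℕ} (σ : Fin n → ℝ) (x : Fin n → ℝ) : ℝ :=
  ∏ p ∈ univ.filter (fun p : Fin n × Fin n => p.1 < p.2),
    (x p.2 - x p.1) ^ (σ p.1 * σ p.2 / 2)

/-- `σ` is the step sequence of a Dyck path. -/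
def IsDyck {n : ℕ} (σ : Fin n → ℝ) : Prop :=
  (∀ i, σ i = 1 ∨ σ i = -1) ∧
    (∀ k : Fin n, 0 ≤ ∑ i ∈ univ.filter (fun i : Fin n => i ≤ k), σ i) ∧
    ∑ i, σ i = 0

/-- The relation `α ⟵ β`: every link of `β` joins an opener of `α` to a closer of `α`. -/
def kwRel {N : ℕ} (α β : PlanarPair N) : Prop :=
  ∀ i, (i < α.val i) ↔ ¬ β.val i < α.val (β.val i)

/-- The incidence matrix `M` of the relation `⟵`. -/
def Mmat (N : ℕ) : Matrix (PlanarPair N) (PlanarPair N) ℝ :=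
  fun α β => if kwRel α β then 1 else 0

/-- The κ = 4 pure partition functions `Z_α = Σ_β (M⁻¹)_{α,β} U_β`. -/
def pureZ {N : ℕ} (α : PlanarPair N) (x : Fin (2 * N) → ℝ) : ℝ :=
  ∑ β : PlanarPair N, (Mmat N)⁻¹ α β * cblock (pairSign β) x

/-- Partial derivative in the `i`-th coordinate. -/
def pd {n : ℕ} (i : Fin n) (f : (Fin n → ℝ) → ℝ) : (Fin n → ℝ) → ℝ :=
  fun x => fderiv ℝ f x (Pi.single i 1)

/-- Doubling a configuration point: the limit point of total fusion. -/
def dup {N : ℕ} (y : Fin (2 * N) → ℝ) : Fin (2 * (2 * N)) → ℝ :=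
  fun i => y ⟨i.val / 2, by have := i.2; omega⟩

/-- The fusion normalization `∏_j (x_{2j} - x_{2j-1})^{1/2}`. -/
def fuseDenom {N : ℕ} (x : Fin (2 * (2 * N)) → ℝ) : ℝ :=
  ∏ j : Fin (2 * N),
    (x ⟨2 * j.val + 1, by have := j.2; omega⟩ - x ⟨2 * j.val, by have := j.2; omega⟩) ^
      ((1 : ℝ) / 2)

/-- `α` contains no link of the form `{2j-1, 2j}` (1-based). -/
def noFuseLink {N : ℕ} (α : PlanarPair (2 * N)) : Prop :=
  ∀ j : Fin (2 * N),
    α.val ⟨2 * j.val, by have := j.2; omega⟩ ≠ ⟨2 * j.val + 1, by have := j.2; omega⟩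

/-- The fused pure partition function `Ẑ_α`, defined as the fusion limit. -/
def fusedZ {N : ℕ} (α : PlanarPair (2 * N)) (y : Fin (2 * N) → ℝ) : ℝ :=
  limUnder (𝓝[chamber (2 * (2 * N))] dup y) fun x => pureZ α x / fuseDenom x

/-- The single-fusion of a conformal block with a slope at `j` (0-based `j`, `j+1`);
the fused point `ξ` sits at coordinate `j`, and coordinate `j+1` is ignored. -/
def Ufuse {n : ℕ} (σ : Fin n → ℝ) (j : ℕ) (hj : j + 1 < n) (x : Fin n → ℝ) : ℝ :=
  (∏ p ∈ univ.filter (fun p : Fin n × Fin n =>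
      p.1 < p.2 ∧ p.1.val ≠ j ∧ p.1.val ≠ j + 1 ∧ p.2.val ≠ j ∧ p.2.val ≠ j + 1),
    (x p.2 - x p.1) ^ (σ p.1 * σ p.2 / 2)) *
  ∏ i ∈ univ.filter (fun i : Fin n => i.val ≠ j ∧ i.val ≠ j + 1),
    |x i - x ⟨j, by omega⟩| ^ (σ i * σ ⟨j, by omega⟩)

/-- The single-fusion `V_{σ/∨_j}` of a conformal block with a local minimum at `j`. -/
def Vfuse {n : ℕ} (σ : Fin n → ℝ) (j : ℕ) (hj : j + 1 < n) (x : Fin n → ℝ) : ℝ :=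
  (∏ p ∈ univ.filter (fun p : Fin n × Fin n =>
      p.1 < p.2 ∧ p.1.val ≠ j ∧ p.1.val ≠ j + 1 ∧ p.2.val ≠ j ∧ p.2.val ≠ j + 1),
    (x p.2 - x p.1) ^ (σ p.1 * σ p.2 / 2)) *
  ∑ i ∈ univ.filter (fun i : Fin n => i.val ≠ j ∧ i.val ≠ j + 1),
    σ i * σ ⟨j, by omega⟩ / (x i - x ⟨j, by omega⟩)

/-- The single-fusion `Z_{α/⨿_j}` of a pure partition function. -/
def Zfuse {N : ℕ} (α : PlanarPair N) (j : ℕ) (hj : j + 1 < 2 * N) (x : Fin (2 * N) → ℝ) : ℝ :=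
  (∑ β ∈ univ.filter (fun β : PlanarPair N =>
      pairSign β ⟨j, by omega⟩ = -1 ∧ pairSign β ⟨j + 1, hj⟩ = 1),
    (Mmat N)⁻¹ α β * Vfuse (pairSign β) j hj x) +
  ∑ β ∈ univ.filter (fun β : PlanarPair N =>
      pairSign β ⟨j, by omega⟩ = pairSign β ⟨j + 1, hj⟩),
    (Mmat N)⁻¹ α β * Ufuse (pairSign β) j hj x

/-- The chamber `x_1 < ⋯ < x_{j-1} < ξ < x_{j+2} < ⋯` for single fusion at `j`:
coordinate `j` carries `ξ` and coordinate `j+1` is ignored. -/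
def fusedChamber (n j : ℕ) : Set (Fin n → ℝ) :=
  {x | ∀ k l : Fin n, k < l → k.val ≠ j + 1 → l.val ≠ j + 1 → x k < x l}

/-- Successor inside `Fin n` (identity at the top). -/
def fsucc {n : ℕ} (e : Fin n) : Fin n := if h : e.val + 1 < n then ⟨e.val + 1, h⟩ else e

/-- The set `J_n^m` of permutations from the fusion combinatorics. -/
def Jset (n m : ℕ) : Finset (Equiv.Perm (Fin n)) :=
  univ.filter fun σ =>
    (∀ k l : Fin n, k.val % 2 = 0 → l.val % 2 = 0 → k.val < l.val → l.val < 2 * m →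
      σ k < σ l) ∧
    (∀ k : Fin n, k.val % 2 = 0 → k.val < 2 * m → σ k < σ (fsucc k)) ∧
    ∀ k l : Fin n, 2 * m ≤ k.val → k.val < l.val → σ k < σ l


/-! ### A calculus of partial derivatives on a set -/

/-- `f` is differentiable at every point of `C`, with `i`-th partial derivative `f'` there. -/
def HasPd {n : ℕ} (C : Set (Fin n → ℝ)) (i : Fin n) (f f' : (Fin n → ℝ) → ℝ) : Prop :=
  ∀ x ∈ C, ∃ L : (Fin n → ℝ) →L[ℝ] ℝ, HasFDerivAt f L x ∧ L (Pi.single i 1) = f' x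

namespace HasPd

variable {n : ℕ} {C : Set (Fin n → ℝ)} {i : Fin n} {f f' g g' : (Fin n → ℝ) → ℝ}

theorem pd_eq (h : HasPd C i f f') {x : Fin n → ℝ} (hx : x ∈ C) : pd i f x = f' x := by
  obtain ⟨L, hL, he⟩ := h x hx
  rw [pd, hL.fderiv, he]

theorem congr_right (h : HasPd C i f f') (he : ∀ x ∈ C, f' x = g' x) : HasPd C i f g' := by
  intro x hx
  obtain ⟨L, hL, hv⟩ := h x hx
  exact ⟨L, hL, hv.trans (he x hx)⟩

theorem congr_left (hC : IsOpen C) (h : HasPd C i f f') (he : ∀ x ∈ C, g x = f x) :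
    HasPd C i g f' := by
  intro x hx
  obtain ⟨L, hL, hv⟩ := h x hx
  refine ⟨L, hL.congr_of_eventuallyEq ?_, hv⟩
  filter_upwards [hC.mem_nhds hx] with y hy using he y hy

theorem const (c : ℝ) : HasPd C i (fun _ => c) (fun _ => 0) :=
  fun x _ => ⟨0, hasFDerivAt_const c x, rfl⟩

theorem coord (k : Fin n) : HasPd C i (fun x => x k) (fun _ => if k = i then 1 else 0) := by
  intro x _
  refine ⟨_, hasFDerivAt_apply k x, ?_⟩
  simp [Pi.single_apply]

theorem add (hf : HasPd C i f f') (hg : HasPd C i g g') :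
    HasPd C i (fun x => f x + g x) (fun x => f' x + g' x) := by
  intro x hx
  obtain ⟨L, hL, hv⟩ := hf x hx
  obtain ⟨K, hK, hw⟩ := hg x hx
  exact ⟨_, hL.add hK, by simp [hv, hw]⟩

theorem sub (hf : HasPd C i f f') (hg : HasPd C i g g') :
    HasPd C i (fun x => f x - g x) (fun x => f' x - g' x) := by
  intro x hx
  obtain ⟨L, hL, hv⟩ := hf x hx
  obtain ⟨K, hK, hw⟩ := hg x hx
  exact ⟨_, hL.sub hK, by simp [hv, hw]⟩

theorem mul (hf : HasPd C i f f') (hg : HasPd C i g g') :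
    HasPd C i (fun x => f x * g x) (fun x => f' x * g x + f x * g' x) := by
  intro x hx
  obtain ⟨L, hL, hv⟩ := hf x hx
  obtain ⟨K, hK, hw⟩ := hg x hx
  exact ⟨_, hL.mul hK, by simp [hv, hw]; ring⟩

theorem const_mul (c : ℝ) (hf : HasPd C i f f') :
    HasPd C i (fun x => c * f x) (fun x => c * f' x) :=
  ((const c).mul hf).congr_right fun x _ => by ring

theorem comp {φ : ℝ → ℝ} {φ' : (Fin n → ℝ) → ℝ} (hf : HasPd C i f f')
    (hφ : ∀ x ∈ C, HasDerivAt φ (φ' x) (f x)) :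
    HasPd C i (fun x => φ (f x)) (fun x => φ' x * f' x) := by
  intro x hx
  obtain ⟨L, hL, hv⟩ := hf x hx
  exact ⟨_, (hφ x hx).comp_hasFDerivAt x hL, by simp [hv]⟩

theorem sum {ι : Type*} (s : Finset ι) {F F' : ι → (Fin n → ℝ) → ℝ}
    (h : ∀ k ∈ s, HasPd C i (F k) (F' k)) :
    HasPd C i (fun x => ∑ k ∈ s, F k x) (fun x => ∑ k ∈ s, F' k x) := by
  induction s using Finset.induction_on with
  | empty => simpa using const 0
  | insert a s ha ih =>
    simp only [Finset.sum_insert ha]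
    exact (h a (by simp)).add (ih fun k hk => h k (by simp [hk]))

end HasPd

/-! ### Solutions of the third-order equation -/

theorem isOpen_fusedChamber (n j : ℕ) : IsOpen (fusedChamber n j) := by
  simp only [fusedChamber, Set.ofPred_forall]
  refine isOpen_iInter_of_finite fun k => isOpen_iInter_of_finite fun l =>
    isOpen_iInter_of_finite fun _ => isOpen_iInter_of_finite fun _ =>
    isOpen_iInter_of_finite fun _ => isOpen_lt (by fun_prop) (by fun_prop)

/-- The indices of the unfused points. -/
def outer (n j : ℕ) : Finset (Fin n) := univ.filter fun i : Fin n => i.val ≠ j ∧ i.val ≠ j + 1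

/-- The pairs of unfused points, each listed in increasing order. -/
def outerPairs (n j : ℕ) : Finset (Fin n × Fin n) :=
  univ.filter fun p : Fin n × Fin n =>
    p.1 < p.2 ∧ p.1.val ≠ j ∧ p.1.val ≠ j + 1 ∧ p.2.val ≠ j ∧ p.2.val ≠ j + 1

/-- `F` solves the third-order equation on the fused chamber, with all partial derivatives
that enter existing in the strong sense of `HasPd`; the fused coordinate is `J`. The strong
form makes the set of solutions visibly a linear space. -/
def IsSol {n : ℕ} (j : ℕ) (J : Fin n) (F : (Fin n → ℝ) → ℝ) : Prop :=
  ∃ (F₁ F₂ F₃ : (Fin n → ℝ) → ℝ) (G H : Fin n → (Fin n → ℝ) → ℝ),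
    HasPd (fusedChamber n j) J F F₁ ∧ HasPd (fusedChamber n j) J F₁ F₂ ∧
    HasPd (fusedChamber n j) J F₂ F₃ ∧
    (∀ i ∈ outer n j, HasPd (fusedChamber n j) i F (G i)) ∧
    (∀ i ∈ outer n j, HasPd (fusedChamber n j) i F₁ (H i)) ∧
    ∀ x ∈ fusedChamber n j,
      F₃ x - 4 * ∑ i ∈ outer n j, ((1 / 4) * F₁ x / (x i - x J) ^ 2 - H i x / (x i - x J))
        + 2 * ∑ i ∈ outer n j, ((1 / 2) * F x / (x i - x J) ^ 3 - G i x / (x i - x J) ^ 2) = 0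

namespace IsSol

variable {n j : ℕ} {J : Fin n} {F F' : (Fin n → ℝ) → ℝ}

theorem zero : IsSol j J (fun _ : Fin n → ℝ => (0 : ℝ)) :=
  ⟨fun _ => 0, fun _ => 0, fun _ => 0, fun _ _ => 0, fun _ _ => 0, .const 0, .const 0, .const 0,
    fun _ _ => .const 0, fun _ _ => .const 0, fun _ _ => by simp⟩

theorem add (h : IsSol j J F) (h' : IsSol j J F') : IsSol j J (fun x => F x + F' x) := by
  obtain ⟨F₁, F₂, F₃, G, H, h1, h2, h3, hG, hH, he⟩ := h
  obtain ⟨F₁', F₂', F₃', G', H', h1', h2', h3', hG', hH', he'⟩ := h'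
  refine ⟨_, _, _, fun i x => G i x + G' i x, fun i x => H i x + H' i x, h1.add h1', h2.add h2',
    h3.add h3', fun i hi => (hG i hi).add (hG' i hi), fun i hi => (hH i hi).add (hH' i hi), ?_⟩
  intro x hx
  have e := he x hx
  have e' := he' x hx
  have s1 : ∑ i ∈ outer n j, ((1 / 4) * (F₁ x + F₁' x) / (x i - x J) ^ 2
        - (H i x + H' i x) / (x i - x J))
      = ∑ i ∈ outer n j, ((1 / 4) * F₁ x / (x i - x J) ^ 2 - H i x / (x i - x J))
      + ∑ i ∈ outer n j, ((1 / 4) * F₁' x / (x i - x J) ^ 2 - H' i x / (x i - x J)) := by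
    rw [← Finset.sum_add_distrib]
    exact Finset.sum_congr rfl fun i _ => by ring
  have s2 : ∑ i ∈ outer n j, ((1 / 2) * (F x + F' x) / (x i - x J) ^ 3
        - (G i x + G' i x) / (x i - x J) ^ 2)
      = ∑ i ∈ outer n j, ((1 / 2) * F x / (x i - x J) ^ 3 - G i x / (x i - x J) ^ 2)
      + ∑ i ∈ outer n j, ((1 / 2) * F' x / (x i - x J) ^ 3 - G' i x / (x i - x J) ^ 2) := by
    rw [← Finset.sum_add_distrib]
    exact Finset.sum_congr rfl fun i _ => by ring
  rw [s1, s2]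
  linarith

theorem const_mul (c : ℝ) (h : IsSol j J F) : IsSol j J (fun x => c * F x) := by
  obtain ⟨F₁, F₂, F₃, G, H, h1, h2, h3, hG, hH, he⟩ := h
  refine ⟨_, _, _, fun i x => c * G i x, fun i x => c * H i x, h1.const_mul c, h2.const_mul c,
    h3.const_mul c, fun i hi => (hG i hi).const_mul c, fun i hi => (hH i hi).const_mul c, ?_⟩
  intro x hx
  have e := he x hx
  have s1 : ∑ i ∈ outer n j, ((1 / 4) * (c * F₁ x) / (x i - x J) ^ 2 - c * H i x / (x i - x J))
      = c * ∑ i ∈ outer n j, ((1 / 4) * F₁ x / (x i - x J) ^ 2 - H i x / (x i - x J)) := by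
    rw [Finset.mul_sum]
    exact Finset.sum_congr rfl fun i _ => by ring
  have s2 : ∑ i ∈ outer n j, ((1 / 2) * (c * F x) / (x i - x J) ^ 3
        - c * G i x / (x i - x J) ^ 2)
      = c * ∑ i ∈ outer n j, ((1 / 2) * F x / (x i - x J) ^ 3 - G i x / (x i - x J) ^ 2) := by
    rw [Finset.mul_sum]
    exact Finset.sum_congr rfl fun i _ => by ring
  rw [s1, s2]
  linear_combination c * e

theorem sum {ι : Type*} (s : Finset ι) {F : ι → (Fin n → ℝ) → ℝ}
    (h : ∀ k ∈ s, IsSol j J (F k)) : IsSol j J (fun x => ∑ k ∈ s, F k x) := by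
  induction s using Finset.induction_on with
  | empty => simpa using zero
  | insert a s ha ih =>
    simp only [Finset.sum_insert ha]
    exact (h a (by simp)).add (ih fun k hk => h k (by simp [hk]))

theorem congr (h : IsSol j J F) (he : ∀ x ∈ fusedChamber n j, F' x = F x) : IsSol j J F' := by
  obtain ⟨F₁, F₂, F₃, G, H, h1, h2, h3, hG, hH, hpde⟩ := h
  have ho := isOpen_fusedChamber n j
  refine ⟨F₁, F₂, F₃, G, H, h1.congr_left ho he, h2, h3,
    fun i hi => (hG i hi).congr_left ho he, hH, fun x hx => ?_⟩
  rw [he x hx]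
  exact hpde x hx

/-- Passage from `IsSol` back to the equation written with the operators `pd`. Openness of the
chamber is what lets an identity between functions on it be differentiated again. -/
theorem pde (h : IsSol j J F) {x : Fin n → ℝ} (hx : x ∈ fusedChamber n j) :
    pd J (pd J (pd J F)) x
      - 4 * ∑ i ∈ outer n j, ((1 / 4) * pd J F x / (x i - x J) ^ 2
          - pd i (pd J F) x / (x i - x J))
      + 2 * ∑ i ∈ outer n j, ((1 / 2) * F x / (x i - x J) ^ 3
          - pd i F x / (x i - x J) ^ 2) = 0 := by
  obtain ⟨F₁, F₂, F₃, G, H, h1, h2, h3, hG, hH, hpde⟩ := h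
  have ho := isOpen_fusedChamber n j
  have k2 := h2.congr_left ho fun x hx => h1.pd_eq hx
  have k3 := h3.congr_left ho fun x hx => k2.pd_eq hx
  rw [k3.pd_eq hx, h1.pd_eq hx, ← hpde x hx]
  congr 2
  · congr 1
    refine Finset.sum_congr rfl fun i hi => ?_
    rw [((hH i hi).congr_left ho fun x hx => h1.pd_eq hx).pd_eq hx]
  · refine Finset.sum_congr rfl fun i hi => ?_
    rw [(hG i hi).pd_eq hx]

end IsSol

/-! ### Power sums and the logarithm of the outer product -/

section Blocks

variable {n j : ℕ} {J : Fin n} {ρ : Fin n → ℝ} {x : Fin n → ℝ}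

/-- The reciprocal distance `1 / (x_k - ξ)`. -/
def recip (J k : Fin n) (x : Fin n → ℝ) : ℝ := (x k - x J)⁻¹

/-- The weighted power sum `∑_k ρ_k / (x_k - ξ)^m` over the outer points. -/
def psum (j : ℕ) (J : Fin n) (ρ : Fin n → ℝ) (m : ℕ) (x : Fin n → ℝ) : ℝ :=
  ∑ k ∈ outer n j, ρ k * recip J k x ^ m

/-- The logarithm `∑_{a<b} (ρ_a ρ_b / 2) log (x_b - x_a)` of the product over outer pairs. -/
def logOuter (j : ℕ) (ρ : Fin n → ℝ) (x : Fin n → ℝ) : ℝ :=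
  ∑ p ∈ outerPairs n j, ρ p.1 * ρ p.2 / 2 * Real.log (x p.2 - x p.1)

/-- The partial derivative of `logOuter` in the `i`-th coordinate. -/
def dLogOuter (j : ℕ) (ρ : Fin n → ℝ) (i : Fin n) (x : Fin n → ℝ) : ℝ :=
  ∑ p ∈ outerPairs n j, ρ p.1 * ρ p.2 / 2 *
    ((x p.2 - x p.1)⁻¹ * ((if p.2 = i then 1 else 0) - if p.1 = i then 1 else 0))

/-- The sum `∑_k ρ_k log |x_k - ξ|`; `Real.log` takes absolute values by itself. -/
def logInner (j : ℕ) (J : Fin n) (ρ : Fin n → ℝ) (x : Fin n → ℝ) : ℝ :=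
  ∑ k ∈ outer n j, ρ k * Real.log (x k - x J)

theorem mem_outer {i : Fin n} : i ∈ outer n j ↔ i.val ≠ j ∧ i.val ≠ j + 1 := by
  simp [outer]

theorem mem_outerPairs {p : Fin n × Fin n} :
    p ∈ outerPairs n j ↔ p.1 < p.2 ∧ p.1 ∈ outer n j ∧ p.2 ∈ outer n j := by
  simp only [outerPairs, outer, mem_filter, mem_univ, true_and]
  tauto

theorem sub_ne_zero_of_outer (hJ : J.val = j) (hx : x ∈ fusedChamber n j) {k : Fin n}
    (hk : k ∈ outer n j) : x k - x J ≠ 0 := by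
  obtain ⟨h1, h2⟩ := mem_outer.1 hk
  rcases lt_or_gt_of_ne h1 with h | h
  · exact (sub_neg.2 (hx k J (by rw [Fin.lt_def]; omega) h2 (by omega))).ne
  · exact (sub_pos.2 (hx J k (by rw [Fin.lt_def]; omega) (by omega) h2)).ne'

theorem sub_pos_of_outerPairs (hx : x ∈ fusedChamber n j) {p : Fin n × Fin n}
    (hp : p ∈ outerPairs n j) : 0 < x p.2 - x p.1 := by
  obtain ⟨h, h1, h2⟩ := mem_outerPairs.1 hp
  exact sub_pos.2 (hx _ _ h (mem_outer.1 h1).2 (mem_outer.1 h2).2)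

theorem ne_of_mem_outer (hJ : J.val = j) {k : Fin n} (hk : k ∈ outer n j) : k ≠ J := by
  rintro rfl
  exact (mem_outer.1 hk).1 hJ

theorem hasPd_recip (hJ : J.val = j) (i : Fin n) {k : Fin n} (hk : k ∈ outer n j) :
    HasPd (fusedChamber n j) i (recip J k)
      (fun x => ((if J = i then 1 else 0) - if k = i then 1 else 0) * recip J k x ^ 2) := by
  refine ((((HasPd.coord k).sub (HasPd.coord J)).comp (φ := fun t => t⁻¹)
    (φ' := fun x => -((x k - x J) ^ 2)⁻¹) fun _ hx => ?_).congr_right fun _ _ => ?_)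
  · exact hasDerivAt_inv (sub_ne_zero_of_outer hJ hx hk)
  · simp only [recip, inv_pow]
    ring

theorem hasPd_psum (hJ : J.val = j) (i : Fin n) (m : ℕ) :
    HasPd (fusedChamber n j) i (psum j J ρ m)
      (fun x => ∑ k ∈ outer n j, ρ k * (m * recip J k x ^ (m - 1) *
        (((if J = i then 1 else 0) - if k = i then 1 else 0) * recip J k x ^ 2))) :=
  HasPd.sum _ fun k hk => ((hasPd_recip hJ i hk).comp (φ := fun t => t ^ m)
    (φ' := fun x => m * recip J k x ^ (m - 1)) fun x _ => hasDerivAt_pow m _).const_mul _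

theorem hasPd_psum_inner (hJ : J.val = j) (m : ℕ) :
    HasPd (fusedChamber n j) J (psum j J ρ (m + 1))
      (fun x => (m + 1) * psum j J ρ (m + 2) x) := by
  refine (hasPd_psum hJ J (m + 1)).congr_right fun x _ => ?_
  rw [psum, Finset.mul_sum]
  refine Finset.sum_congr rfl fun k hk => ?_
  simp only [ne_of_mem_outer hJ hk, if_true, if_false, Nat.add_sub_cancel]
  push_cast
  ring

theorem hasPd_psum_outer (hJ : J.val = j) (m : ℕ) {i : Fin n} (hi : i ∈ outer n j) :
    HasPd (fusedChamber n j) i (psum j J ρ (m + 1))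
      (fun x => -((m + 1) * (ρ i * recip J i x ^ (m + 2)))) := by
  refine (hasPd_psum hJ i (m + 1)).congr_right fun x _ => ?_
  rw [Finset.sum_eq_single_of_mem i hi]
  · simp only [(ne_of_mem_outer hJ hi).symm, if_true, if_false, Nat.add_sub_cancel]
    push_cast
    ring
  · intro k _ hk
    simp [hk, (ne_of_mem_outer hJ hi).symm]

theorem hasPd_logOuter (i : Fin n) :
    HasPd (fusedChamber n j) i (logOuter j ρ) (dLogOuter j ρ i) :=
  HasPd.sum _ fun p hp => (((HasPd.coord p.2).sub (HasPd.coord p.1)).comp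
    (fun _ hx => Real.hasDerivAt_log (sub_pos_of_outerPairs hx hp).ne')).const_mul _

theorem dLogOuter_inner (hJ : J.val = j) : dLogOuter j ρ J x = 0 := by
  refine Finset.sum_eq_zero fun p hp => ?_
  obtain ⟨_, h1, h2⟩ := mem_outerPairs.1 hp
  simp [ne_of_mem_outer hJ h1, ne_of_mem_outer hJ h2]

theorem hasPd_logInner (hJ : J.val = j) (i : Fin n) :
    HasPd (fusedChamber n j) i (logInner j J ρ) (fun x => ∑ k ∈ outer n j,
      ρ k * (recip J k x * ((if k = i then 1 else 0) - if J = i then 1 else 0))) :=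
  HasPd.sum _ fun k hk => (((HasPd.coord k).sub (HasPd.coord J)).comp
    (fun _ hx => Real.hasDerivAt_log (sub_ne_zero_of_outer hJ hx hk))).const_mul _

theorem hasPd_logInner_inner (hJ : J.val = j) :
    HasPd (fusedChamber n j) J (logInner j J ρ) (fun x => -psum j J ρ 1 x) := by
  refine (hasPd_logInner hJ J).congr_right fun x _ => ?_
  rw [psum, ← Finset.sum_neg_distrib]
  refine Finset.sum_congr rfl fun k hk => ?_
  simp [ne_of_mem_outer hJ hk]

theorem hasPd_logInner_outer (hJ : J.val = j) {i : Fin n} (hi : i ∈ outer n j) :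
    HasPd (fusedChamber n j) i (logInner j J ρ) (fun x => ρ i * recip J i x) := by
  refine (hasPd_logInner hJ i).congr_right fun x _ => ?_
  rw [Finset.sum_eq_single_of_mem i hi]
  · simp [(ne_of_mem_outer hJ hi).symm]
  · intro k _ hk
    simp [hk, (ne_of_mem_outer hJ hi).symm]

/-! ### The two summation identities -/

theorem sum_outer_prod (g : Fin n → Fin n → ℝ) :
    ∑ a ∈ outer n j, ∑ b ∈ outer n j, g a b
      = ∑ p ∈ outerPairs n j, (g p.1 p.2 + g p.2 p.1) + ∑ a ∈ outer n j, g a a := by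
  have hP : outerPairs n j = (outer n j ×ˢ outer n j).filter (fun p => p.1 < p.2) := by
    ext p
    simp only [mem_outerPairs, mem_filter, mem_product]
    tauto
  have hlt : ∀ f : Fin n → Fin n → ℝ, ∑ p ∈ outerPairs n j, f p.1 p.2
      = ∑ a ∈ outer n j, ∑ b ∈ outer n j, if a < b then f a b else 0 := by
    intro f
    rw [hP, Finset.sum_filter, Finset.sum_product]
  have hd : ∑ a ∈ outer n j, g a a
      = ∑ a ∈ outer n j, ∑ b ∈ outer n j, if a = b then g a b else 0 := by
    refine Finset.sum_congr rfl fun a ha => ?_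
    rw [Finset.sum_ite_eq, if_pos ha]
  rw [Finset.sum_add_distrib, hlt g, hlt fun a b => g b a, hd,
    Finset.sum_comm (f := fun a b => if a < b then g b a else 0), ← Finset.sum_add_distrib,
    ← Finset.sum_add_distrib]
  refine Finset.sum_congr rfl fun a _ => ?_
  rw [← Finset.sum_add_distrib, ← Finset.sum_add_distrib]
  refine Finset.sum_congr rfl fun b _ => ?_
  rcases lt_trichotomy a b with h | h | h
  · simp [h, h.ne, h.le]
  · simp [h]
  · simp [h, h.ne', h.le]

theorem sum_mul_dLogOuter (w : Fin n → ℝ) :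
    ∑ i ∈ outer n j, w i * dLogOuter j ρ i x
      = ∑ p ∈ outerPairs n j, ρ p.1 * ρ p.2 / 2 * ((x p.2 - x p.1)⁻¹ * (w p.2 - w p.1)) := by
  simp only [dLogOuter, Finset.mul_sum]
  rw [Finset.sum_comm]
  refine Finset.sum_congr rfl fun p hp => ?_
  obtain ⟨_, h1, h2⟩ := mem_outerPairs.1 hp
  have e1 : ∑ i ∈ outer n j, w i * (if p.1 = i then (1 : ℝ) else 0) = w p.1 := by
    simp [h1]
  have e2 : ∑ i ∈ outer n j, w i * (if p.2 = i then (1 : ℝ) else 0) = w p.2 := by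
    simp [h2]
  rw [← e1, ← e2, ← Finset.sum_sub_distrib, Finset.mul_sum, Finset.mul_sum]
  exact Finset.sum_congr rfl fun i _ => by ring

theorem inv_sub_mul_recip_sub (hJ : J.val = j) (hx : x ∈ fusedChamber n j) {p : Fin n × Fin n}
    (hp : p ∈ outerPairs n j) :
    (x p.2 - x p.1)⁻¹ * (recip J p.2 x - recip J p.1 x) = -(recip J p.1 x * recip J p.2 x) := by
  obtain ⟨_, h1, h2⟩ := mem_outerPairs.1 hp
  have a1 := sub_ne_zero_of_outer hJ hx h1
  have a2 := sub_ne_zero_of_outer hJ hx h2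
  have a3 := (sub_pos_of_outerPairs hx hp).ne'
  simp only [recip]
  field_simp
  ring

/-- With `u_k = 1 / (x_k - ξ)`, the identity `(u_b - u_a) / (x_b - x_a) = -u_a u_b` turns
`∑_i u_i ∂_i log P` into a quadratic expression in power sums. -/
theorem sum_recip_mul_dLogOuter (hJ : J.val = j) (hρ : ∀ k, ρ k ^ 2 = 1)
    (hx : x ∈ fusedChamber n j) :
    4 * ∑ i ∈ outer n j, recip J i x * dLogOuter j ρ i x
      = (∑ i ∈ outer n j, recip J i x ^ 2) - psum j J ρ 1 x ^ 2 := by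
  have h := sum_outer_prod (j := j) fun a b => (ρ a * recip J a x) * (ρ b * recip J b x)
  rw [← Finset.sum_mul_sum] at h
  have hd : ∑ a ∈ outer n j, (ρ a * recip J a x) * (ρ a * recip J a x)
      = ∑ a ∈ outer n j, recip J a x ^ 2 :=
    Finset.sum_congr rfl fun a _ => by linear_combination recip J a x ^ 2 * hρ a
  have hp : ∑ p ∈ outerPairs n j, ((ρ p.1 * recip J p.1 x) * (ρ p.2 * recip J p.2 x)
        + (ρ p.2 * recip J p.2 x) * (ρ p.1 * recip J p.1 x))
      = -(4 * ∑ i ∈ outer n j, recip J i x * dLogOuter j ρ i x) := by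
    rw [sum_mul_dLogOuter, Finset.mul_sum, ← Finset.sum_neg_distrib]
    refine Finset.sum_congr rfl fun p hp => ?_
    rw [inv_sub_mul_recip_sub hJ hx hp]
    ring
  simp only [psum, pow_one]
  linear_combination hp + hd + h

theorem sum_recip_sq_mul_dLogOuter (hJ : J.val = j) (hρ : ∀ k, ρ k ^ 2 = 1)
    (hx : x ∈ fusedChamber n j) :
    2 * ∑ i ∈ outer n j, recip J i x ^ 2 * dLogOuter j ρ i x
      = (∑ i ∈ outer n j, recip J i x ^ 3) - psum j J ρ 1 x * psum j J ρ 2 x := by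
  have h := sum_outer_prod (j := j) fun a b => (ρ a * recip J a x) * (ρ b * recip J b x ^ 2)
  rw [← Finset.sum_mul_sum] at h
  have hd : ∑ a ∈ outer n j, (ρ a * recip J a x) * (ρ a * recip J a x ^ 2)
      = ∑ a ∈ outer n j, recip J a x ^ 3 :=
    Finset.sum_congr rfl fun a _ => by linear_combination recip J a x ^ 3 * hρ a
  have hp : ∑ p ∈ outerPairs n j, ((ρ p.1 * recip J p.1 x) * (ρ p.2 * recip J p.2 x ^ 2)
        + (ρ p.2 * recip J p.2 x) * (ρ p.1 * recip J p.1 x ^ 2))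
      = -(2 * ∑ i ∈ outer n j, recip J i x ^ 2 * dLogOuter j ρ i x) := by
    rw [sum_mul_dLogOuter, Finset.mul_sum, ← Finset.sum_neg_distrib]
    refine Finset.sum_congr rfl fun p hp => ?_
    linear_combination (ρ p.1 * ρ p.2 * (recip J p.1 x + recip J p.2 x)) *
      inv_sub_mul_recip_sub hJ hx hp
  simp only [psum, pow_one]
  linear_combination hp + hd + h

/-! ### The two families of solutions -/

/-- The exponential form `P ∏_k |x_k - ξ|^{ρ_k}` of a block fused at a slope is a solution. -/
theorem isSol_slope (hJ : J.val = j) (hρ : ∀ k, ρ k ^ 2 = 1) :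
    IsSol j J (fun x => Real.exp (logOuter j ρ x + logInner j J ρ x)) := by
  set E : (Fin n → ℝ) → ℝ := fun x => Real.exp (logOuter j ρ x + logInner j J ρ x) with hE
  have hEJ : HasPd (fusedChamber n j) J E (fun x => -psum j J ρ 1 x * E x) :=
    (((hasPd_logOuter J).add (hasPd_logInner_inner hJ)).comp
      (fun x _ => Real.hasDerivAt_exp _)).congr_right fun x _ => by
        rw [dLogOuter_inner hJ]; ring
  have hEi : ∀ i ∈ outer n j, HasPd (fusedChamber n j) i E
      (fun x => (dLogOuter j ρ i x + ρ i * recip J i x) * E x) := fun i hi =>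
    (((hasPd_logOuter i).add (hasPd_logInner_outer hJ hi)).comp
      (fun x _ => Real.hasDerivAt_exp _)).congr_right fun x _ => by ring
  have hA := hasPd_psum_inner (ρ := ρ) hJ 0
  have hA2 := hasPd_psum_inner (ρ := ρ) hJ 1
  refine ⟨fun x => -psum j J ρ 1 x * E x,
    fun x => (psum j J ρ 1 x ^ 2 - psum j J ρ 2 x) * E x,
    fun x => (-psum j J ρ 1 x ^ 3 + 3 * psum j J ρ 1 x * psum j J ρ 2 x
      - 2 * psum j J ρ 3 x) * E x,
    fun i x => (dLogOuter j ρ i x + ρ i * recip J i x) * E x,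
    fun i x => (ρ i * recip J i x ^ 2
      - psum j J ρ 1 x * (dLogOuter j ρ i x + ρ i * recip J i x)) * E x,
    hEJ, ?_, ?_, hEi, ?_, ?_⟩
  · refine (((hA.mul hEJ).const_mul (-1)).congr_right fun x _ => ?_).congr_left
      (isOpen_fusedChamber n j) fun x _ => ?_
    · norm_num
      ring
    · norm_num
  · refine (((hA.mul hA).sub hA2).mul hEJ |>.congr_right fun x _ => ?_).congr_left
      (isOpen_fusedChamber n j) fun x _ => ?_
    · norm_num
      ring
    · norm_num
      left; ring
  · intro i hi
    refine ((((hasPd_psum_outer (ρ := ρ) hJ 0 hi).mul (hEi i hi)).const_mul (-1)).congr_right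
      fun x _ => ?_).congr_left (isOpen_fusedChamber n j) fun x _ => ?_
    · norm_num
      ring
    · norm_num
  · intro x hx
    have s1 : ∑ i ∈ outer n j, ((1 / 4) * (-psum j J ρ 1 x * E x) / (x i - x J) ^ 2
          - (ρ i * recip J i x ^ 2 - psum j J ρ 1 x * (dLogOuter j ρ i x + ρ i * recip J i x))
            * E x / (x i - x J))
        = E x * (-(1 / 4) * psum j J ρ 1 x * (∑ i ∈ outer n j, recip J i x ^ 2)
          - psum j J ρ 3 x + psum j J ρ 1 x * (∑ i ∈ outer n j, recip J i x * dLogOuter j ρ i x)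
          + psum j J ρ 1 x * psum j J ρ 2 x) := by
      rw [show psum j J ρ 3 x = ∑ k ∈ outer n j, ρ k * recip J k x ^ 3 from rfl,
        show psum j J ρ 2 x = ∑ k ∈ outer n j, ρ k * recip J k x ^ 2 from rfl]
      simp only [Finset.mul_sum, ← Finset.sum_add_distrib, ← Finset.sum_sub_distrib]
      refine Finset.sum_congr rfl fun i _ => ?_
      simp only [recip]
      generalize x i - x J = d
      ring
    have s2 : ∑ i ∈ outer n j, ((1 / 2) * E x / (x i - x J) ^ 3
          - (dLogOuter j ρ i x + ρ i * recip J i x) * E x / (x i - x J) ^ 2)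
        = E x * ((1 / 2) * (∑ i ∈ outer n j, recip J i x ^ 3)
          - (∑ i ∈ outer n j, recip J i x ^ 2 * dLogOuter j ρ i x) - psum j J ρ 3 x) := by
      rw [show psum j J ρ 3 x = ∑ k ∈ outer n j, ρ k * recip J k x ^ 3 from rfl]
      simp only [Finset.mul_sum, ← Finset.sum_sub_distrib]
      refine Finset.sum_congr rfl fun i _ => ?_
      simp only [recip]
      generalize x i - x J = d
      ring
    rw [s1, s2]
    linear_combination (-(E x * psum j J ρ 1 x)) * sum_recip_mul_dLogOuter hJ hρ hx
      - E x * sum_recip_sq_mul_dLogOuter hJ hρ hx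

/-- The exponential form `P ∑_k ρ_k / (x_k - ξ)` of a block fused at a local minimum is a
solution. -/
theorem isSol_min (hJ : J.val = j) (hρ : ∀ k, ρ k ^ 2 = 1) :
    IsSol j J (fun x => psum j J ρ 1 x * Real.exp (logOuter j ρ x)) := by
  set E : (Fin n → ℝ) → ℝ := fun x => Real.exp (logOuter j ρ x) with hE
  have hEJ : HasPd (fusedChamber n j) J E (fun _ => 0) :=
    ((hasPd_logOuter J).comp (fun x _ => Real.hasDerivAt_exp _)).congr_right fun x _ => by
        rw [dLogOuter_inner hJ]; ring
  have hEi : ∀ i ∈ outer n j, HasPd (fusedChamber n j) i E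
      (fun x => dLogOuter j ρ i x * E x) := fun i hi =>
    ((hasPd_logOuter i).comp
      (fun x _ => Real.hasDerivAt_exp _)).congr_right fun x _ => by ring
  have hA := hasPd_psum_inner (ρ := ρ) hJ 0
  have hA2 := hasPd_psum_inner (ρ := ρ) hJ 1
  have hA3 := hasPd_psum_inner (ρ := ρ) hJ 2
  refine ⟨fun x => psum j J ρ 2 x * E x,
    fun x => 2 * (psum j J ρ 3 x * E x),
    fun x => 6 * (psum j J ρ 4 x * E x),
    fun i x => (psum j J ρ 1 x * dLogOuter j ρ i x - ρ i * recip J i x ^ 2) * E x,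
    fun i x => (psum j J ρ 2 x * dLogOuter j ρ i x - 2 * (ρ i * recip J i x ^ 3)) * E x,
    ?_, ?_, ?_, ?_, ?_, ?_⟩
  · refine (hA.mul hEJ).congr_right fun x _ => ?_
    norm_num
  · refine (hA2.mul hEJ).congr_right fun x _ => ?_
    norm_num
    ring
  · refine ((hA3.mul hEJ).const_mul 2).congr_right fun x _ => ?_
    norm_num
    ring
  · intro i hi
    refine ((hasPd_psum_outer (ρ := ρ) hJ 0 hi).mul (hEi i hi)).congr_right fun x _ => ?_
    norm_num
    ring
  · intro i hi
    refine ((hasPd_psum_outer (ρ := ρ) hJ 1 hi).mul (hEi i hi)).congr_right fun x _ => ?_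
    norm_num
    ring
  · intro x hx
    have s1 : ∑ i ∈ outer n j, ((1 / 4) * (psum j J ρ 2 x * E x) / (x i - x J) ^ 2
          - (psum j J ρ 2 x * dLogOuter j ρ i x - 2 * (ρ i * recip J i x ^ 3))
            * E x / (x i - x J))
        = E x * ((1 / 4) * psum j J ρ 2 x * (∑ i ∈ outer n j, recip J i x ^ 2)
          - psum j J ρ 2 x * (∑ i ∈ outer n j, recip J i x * dLogOuter j ρ i x)
          + 2 * psum j J ρ 4 x) := by
      rw [show psum j J ρ 4 x = ∑ k ∈ outer n j, ρ k * recip J k x ^ 4 from rfl]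
      simp only [Finset.mul_sum, ← Finset.sum_add_distrib, ← Finset.sum_sub_distrib]
      refine Finset.sum_congr rfl fun i _ => ?_
      simp only [recip]
      generalize x i - x J = d
      ring
    have s2 : ∑ i ∈ outer n j, ((1 / 2) * (psum j J ρ 1 x * E x) / (x i - x J) ^ 3
          - (psum j J ρ 1 x * dLogOuter j ρ i x - ρ i * recip J i x ^ 2) * E x
            / (x i - x J) ^ 2)
        = E x * ((1 / 2) * psum j J ρ 1 x * (∑ i ∈ outer n j, recip J i x ^ 3)
          - psum j J ρ 1 x * (∑ i ∈ outer n j, recip J i x ^ 2 * dLogOuter j ρ i x)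
          + psum j J ρ 4 x) := by
      rw [show psum j J ρ 4 x = ∑ k ∈ outer n j, ρ k * recip J k x ^ 4 from rfl]
      simp only [Finset.mul_sum, ← Finset.sum_add_distrib, ← Finset.sum_sub_distrib]
      refine Finset.sum_congr rfl fun i _ => ?_
      simp only [recip]
      generalize x i - x J = d
      ring
    rw [s1, s2]
    linear_combination (E x * psum j J ρ 2 x) * sum_recip_mul_dLogOuter hJ hρ hx
      - E x * psum j J ρ 1 x * sum_recip_sq_mul_dLogOuter hJ hρ hx

end Blocks

/-! ### Fused conformal blocks -/

section Fused

variable {n j : ℕ} {σ : Fin n → ℝ}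

/-- On the chamber the outer product is an exponential. The exponents only see the products
`σ_a σ_b`, which do not change when `σ` is multiplied by the sign `σ_j`. -/
theorem exp_logOuter (J : Fin n) (hσ : ∀ k, σ k ^ 2 = 1) {x : Fin n → ℝ}
    (hx : x ∈ fusedChamber n j) :
    Real.exp (logOuter j (fun k => σ k * σ J) x)
      = ∏ p ∈ outerPairs n j, (x p.2 - x p.1) ^ (σ p.1 * σ p.2 / 2) := by
  rw [logOuter, Real.exp_sum]
  refine Finset.prod_congr rfl fun p hp => ?_
  rw [Real.rpow_def_of_pos (sub_pos_of_outerPairs hx hp)]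
  congr 1
  linear_combination (σ p.1 * σ p.2 / 2 * Real.log (x p.2 - x p.1)) * hσ J

theorem isSol_Ufuse (hj : j + 1 < n) (hσ : ∀ k, σ k ^ 2 = 1) :
    IsSol j ⟨j, by omega⟩ (Ufuse σ j hj) := by
  refine (isSol_slope (j := j) (J := ⟨j, by omega⟩) (ρ := fun k => σ k * σ ⟨j, by omega⟩) rfl
    fun k => by rw [mul_pow, hσ, hσ, one_mul]).congr fun x hx => ?_
  rw [Real.exp_add, exp_logOuter _ hσ hx, logInner, Real.exp_sum]
  refine congrArg _ (Finset.prod_congr rfl fun i hi => ?_)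
  rw [Real.rpow_def_of_pos (abs_pos.2 (sub_ne_zero_of_outer rfl hx hi)), Real.log_abs, mul_comm]

theorem isSol_Vfuse (hj : j + 1 < n) (hσ : ∀ k, σ k ^ 2 = 1) :
    IsSol j ⟨j, by omega⟩ (Vfuse σ j hj) := by
  refine (isSol_min (j := j) (J := ⟨j, by omega⟩) (ρ := fun k => σ k * σ ⟨j, by omega⟩) rfl
    fun k => by rw [mul_pow, hσ, hσ, one_mul]).congr fun x hx => ?_
  rw [exp_logOuter _ hσ hx, mul_comm (psum _ _ _ _ _)]
  refine congrArg _ (Finset.sum_congr rfl fun i hi => ?_)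
  rw [recip, pow_one, div_eq_mul_inv]

end Fused

theorem pairSign_sq {N : ℕ} (β : PlanarPair N) (i : Fin (2 * N)) : pairSign β i ^ 2 = 1 := by
  unfold pairSign
  split_ifs <;> norm_num

theorem isSol_Zfuse {N : ℕ} (α : PlanarPair N) (j : ℕ) (hj : j + 1 < 2 * N) :
    IsSol j ⟨j, by omega⟩ (Zfuse α j hj) :=
  (IsSol.sum _ fun β _ => (isSol_Vfuse hj (pairSign_sq β)).const_mul _).add
    (IsSol.sum _ fun β _ => (isSol_Ufuse hj (pairSign_sq β)).const_mul _)

/-- The fused partition function `Z_{α/⨿_j}` satisfies the third-order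
PDE (κ = 4) in the fusion variable `ξ` (coordinate `j`; coordinate `j+1` is ignored). -/
theorem Zfuse_thirdOrderPDE (N : ℕ) (hN : 1 ≤ N) (α : PlanarPair N)
    (j : ℕ) (hj : j + 1 < 2 * N)
    (hlink : α.val ⟨j, by omega⟩ ≠ ⟨j + 1, hj⟩) :
    ∀ x ∈ fusedChamber (2 * N) j,
      pd ⟨j, by omega⟩ (pd ⟨j, by omega⟩ (pd ⟨j, by omega⟩ (Zfuse α j hj))) x
        - 4 * ∑ i ∈ univ.filter (fun i : Fin (2 * N) => i.val ≠ j ∧ i.val ≠ j + 1),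
            ((1 / 4) * pd ⟨j, by omega⟩ (Zfuse α j hj) x / (x i - x ⟨j, by omega⟩) ^ 2 -
              pd i (pd ⟨j, by omega⟩ (Zfuse α j hj)) x / (x i - x ⟨j, by omega⟩))
        + 2 * ∑ i ∈ univ.filter (fun i : Fin (2 * N) => i.val ≠ j ∧ i.val ≠ j + 1),
            ((1 / 2) * Zfuse α j hj x / (x i - x ⟨j, by omega⟩) ^ 3 -
              pd i (Zfuse α j hj) x / (x i - x ⟨j, by omega⟩) ^ 2) = 0 := by
  intro x hx
  exact (isSol_Zfuse α j hj).pde hx
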